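/- Suppose X^n ⊂ ℝ^d (d ≥ 2) is in general position, let λ_0 = inf over u ∈ S^{d−1} of λ*(X_u^n), and let m be an integer with 1 ≤ m ≤ n·λ_0 − 1. Then for every y ∈ ℝ^d, if Y^m consists of m repetitions of y, the Tukey halfspace median of the contaminated sample satisfies T*(X^n ∪ Y^m) ∈ cov(X^n); that is, fewer than n·λ_0 repetitions of an arbitrary point cannot move the halfspace median outside the convex hull of the original sample. -/

import Mathlib

open scoped RealInnerProductSpace
open MeasureTheory

noncomputable section

/-- `E d` is the Euclidean space `ℝ^d`. -/
abbrev E (d : ℕ) : Type := EuclideanSpace ℝ (Fin d)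

/-- A sample `X` of `n` points in `ℝ^d` is in general position if no affine hyperplane
(encoded as `{x | ⟪v, x⟫ = c}` for some `v ≠ 0`) contains more than `d` of the points. -/
def inGeneralPosition {d n : ℕ} (X : Fin n → E d) : Prop :=
  ∀ v : E d, v ≠ 0 → ∀ c : ℝ, ({i : Fin n | ⟪v, X i⟫ = c} : Set (Fin n)).ncard ≤ d

/-- Number of sample points in the closed halfspace `{z | ⟪u, z⟫ ≤ ⟪u, x⟫}`. -/
def sideCount {d n : ℕ} (X : Fin n → E d) (u x : E d) : ℕ :=
  ({i : Fin n | ⟪u, X i⟫ ≤ ⟪u, x⟫} : Set (Fin n)).ncard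

/-- Tukey's halfspace depth of `x` with respect to the sample `X`. -/
def depth {d n : ℕ} (X : Fin n → E d) (x : E d) : ℝ :=
  sInf {r : ℝ | ∃ u : E d, ‖u‖ = 1 ∧ r = (sideCount X u x : ℝ) / (n : ℝ)}

/-- The maximum Tukey depth `λ*` of the sample `X`. -/
def maxDepth {d n : ℕ} (X : Fin n → E d) : ℝ :=
  sSup (Set.range (depth X))

/-- The set `M(X)` of deepest points. -/
def MSet {d n : ℕ} (X : Fin n → E d) : Set (E d) :=
  {x | depth X x = maxDepth X}

/-- `U_x`: the set of optimal (unit) directions realizing the depth at `x`. -/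
def USet {d n : ℕ} (X : Fin n → E d) (x : E d) : Set (E d) :=
  {u | ‖u‖ = 1 ∧ (sideCount X u x : ℝ) / (n : ℝ) = depth X x}

/-- `H_{x,y}`: the open hemisphere of unit directions `u` with `⟪u, x⟫ < ⟪u, y⟫`. -/
def HSet {d : ℕ} (x y : E d) : Set (E d) :=
  {u | ‖u‖ = 1 ∧ ⟪u, x⟫ < ⟪u, y⟫}

/-- `B_z`. -/
def BSet {d n : ℕ} (X : Fin n → E d) (z : E d) : Set (E d) :=
  {x | x ∈ MSet X ∧ USet X x ∩ HSet x z = ∅}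

/-- `B̃_z = B_z \ {z}`. -/
def BTilde {d n : ℕ} (X : Fin n → E d) (z : E d) : Set (E d) :=
  BSet X z \ {z}

/-- `v` is a unit vector normal to an affine hyperplane spanned by `d` of the sample points. -/
def normalToSampleHyperplane {d n : ℕ} (X : Fin n → E d) (v : E d) : Prop :=
  ‖v‖ = 1 ∧ ∃ (s : Finset (Fin n)) (c : ℝ), s.card = d ∧
    (affineSpan ℝ (X '' (s : Set (Fin n))) : Set (E d)) = {x : E d | ⟪v, x⟫ = c}

/-- Condition (2.1) on a unit direction `u`. -/
def cond21 {d n : ℕ} (X : Fin n → E d) (u : E d) : Prop :=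
  ∀ v : E d, normalToSampleHyperplane X v → ⟪u, v⟫ ≠ 0

/-- `A` represents the columns of a `d × (d-1)` matrix which together with the unit
vector `u` form an orthonormal basis of `ℝ^d`. -/
def IsAu {d : ℕ} (u : E d) (A : Fin (d - 1) → E d) : Prop :=
  ‖u‖ = 1 ∧ Orthonormal ℝ A ∧ ∀ j, ⟪A j, u⟫ = 0

/-- The `A_u`-projection `A_u^T x ∈ ℝ^{d-1}` of a point `x ∈ ℝ^d`. -/
def proj {d : ℕ} (A : Fin (d - 1) → E d) (x : E d) : E (d - 1) :=
  (WithLp.equiv 2 (Fin (d - 1) → ℝ)).symm (fun j => ⟪A j, x⟫)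

/-- The embedding `A_u x = ∑ j x_j A_j ∈ ℝ^d` of a point `x ∈ ℝ^{d-1}`. -/
def embed {d : ℕ} (A : Fin (d - 1) → E d) (x : E (d - 1)) : E d :=
  ∑ j, x j • A j

/-- `λ₀ = inf_{u ∈ S^{d-1}} λ*(X_u^n)`, the infimum over all directions of the maximum
Tukey depth of the projected sample. -/
def lambda0 {d n : ℕ} (X : Fin n → E d) : ℝ :=
  sInf {r : ℝ | ∃ (u : E d) (A : Fin (d - 1) → E d),
    IsAu u A ∧ r = maxDepth (fun i => proj A (X i))}

/-- The average (barycenter) of a set `K ⊆ ℝ^d`, taken with respect to the Hausdorff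
measure of dimension equal to the affine dimension of `K`. -/
def setAverage {d : ℕ} (K : Set (E d)) : E d :=
  (μH[(Module.finrank ℝ (affineSpan ℝ K).direction : ℝ)] K).toReal⁻¹ •
    ∫ x in K, x ∂(μH[(Module.finrank ℝ (affineSpan ℝ K).direction : ℝ)])

/-- Tukey's halfspace median: the average of all deepest points. -/
def TukeyMedian {d n : ℕ} (X : Fin n → E d) : E d :=
  setAverage (MSet X)

/-- `m` contaminating points suffice to break down the Tukey median at `X`. -/
def breaksDown {d n : ℕ} (X : Fin n → E d) (m : ℕ) : Prop :=
  ∀ C : ℝ, ∃ Y : Fin m → E d, C < ‖TukeyMedian (Fin.append X Y) - TukeyMedian X‖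

/-- The finite sample (additional) breakdown point of the Tukey median at `X`. -/
def FSBP {d n : ℕ} (X : Fin n → E d) : ℝ :=
  sInf {r : ℝ | ∃ m : ℕ, 1 ≤ m ∧ breaksDown X m ∧ r = (m : ℝ) / ((n : ℝ) + (m : ℝ))}

/-!
Translate `y` to the origin, put `k = m + 1` and call a direction `v` bad if fewer than `k` sample
points satisfy `0 ≤ ⟪v, X i⟫`. Since every projection of the sample has a point of depth at least
`k / n`, no nonnegative combination of bad directions is positive on the whole sample. If the
origin lies outside the hull, some direction is positive on the whole sample, so the open convex
hull of the bad directions misses `0` and lies in a halfspace `{v | ⟪u, v⟫ < 0}`. By separation, the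
ray spanned by `u` then meets the convex hull of any more than `n - k` sample points.

Let `x` be the first point of the hull of the sample on this ray. Halfspaces
`{z | ⟪v, z⟫ ≤ ⟪v, x⟫}` missing `y` contain at least `k` sample points: otherwise the hull of the
remaining points would meet the ray before `x`. Halfspaces containing `y` contain its `m` copies and
at least one sample point. So the contaminated sample has maximal depth at least `k / (n + m)`,
whereas a halfspace separating a point outside the hull from the sample contains nothing but copies
of `y`. Hence the set of deepest points lies in the hull, and so does its barycenter.
-/

section ConicalHull

variable {R M : Type*} [Field R] [LinearOrder R] [IsStrictOrderedRing R]
  [AddCommGroup M] [Module R M]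

theorem mem_hull_finset {t : Finset M} {x : M} :
    x ∈ PointedCone.hull R (t : Set M) ↔
      ∃ c : M → R, (∀ v ∈ t, 0 ≤ c v) ∧ ∑ v ∈ t, c v • v = x := by
  constructor
  · intro hx
    obtain ⟨c, -, rfl⟩ := Submodule.mem_span_finset.1 hx
    exact ⟨fun v => c v, fun v _ => (c v).2, rfl⟩
  · rintro ⟨c, hc, rfl⟩
    exact sum_mem fun v hv => PointedCone.smul_mem _ (hc v hv) (PointedCone.subset_hull hv)

theorem exists_sum_smul_eq_zero_of_not_linearIndepOn {t : Finset M}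
    (ht : ¬ LinearIndepOn R id (t : Set M)) :
    ∃ g : M → R, ∑ v ∈ t, g v • v = 0 ∧ ∃ v ∈ t, 0 < g v := by
  simp only [linearIndepOn_finset_iff, not_forall, id_eq] at ht
  obtain ⟨g, hg, v, hv, hgv⟩ := ht
  rcases lt_or_gt_of_ne hgv with hneg | hpos
  · exact ⟨-g, by simp [hg], v, hv, neg_pos.2 hneg⟩
  · exact ⟨g, hg, v, hv, hpos⟩

-- Subtract from the coefficients of `x` the smallest positive multiple of a linear relation that
-- makes one of them vanish.
theorem mem_hull_erase_of_not_linearIndepOn [DecidableEq M] {t : Finset M} {x : M}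
    (ht : ¬ LinearIndepOn R id (t : Set M)) (hx : x ∈ PointedCone.hull R (t : Set M)) :
    ∃ v ∈ t, x ∈ PointedCone.hull R (t.erase v : Set M) := by
  obtain ⟨c, hc, rfl⟩ := mem_hull_finset.1 hx
  obtain ⟨g, hg, hpos⟩ := exists_sum_smul_eq_zero_of_not_linearIndepOn ht
  obtain ⟨v, hv, hmin⟩ := ({v ∈ t | 0 < g v} : Finset M).exists_min_image (fun v => c v / g v)
    (by simpa [Finset.Nonempty] using hpos)
  simp only [Finset.mem_filter, and_imp] at hv hmin
  obtain ⟨hvt, hgv⟩ := hv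
  refine ⟨v, hvt, mem_hull_finset.2 ⟨fun w => c w - c v / g v * g w, fun w hw => ?_, ?_⟩⟩
  · have hwt := Finset.mem_of_mem_erase hw
    rw [sub_nonneg]
    rcases lt_or_ge 0 (g w) with hgw | hgw
    · exact (le_div_iff₀ hgw).1 (hmin w hwt hgw)
    · exact (mul_nonpos_of_nonneg_of_nonpos (div_nonneg (hc v hvt) hgv.le) hgw).trans (hc w hwt)
  · rw [Finset.sum_erase _ (by simp [hgv.ne'])]
    simp [sub_smul, Finset.sum_sub_distrib, mul_smul, ← Finset.smul_sum, hg]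

theorem exists_linearIndepOn_subset_mem_hull {s : Set M} {x : M} (hx : x ∈ PointedCone.hull R s) :
    ∃ t ⊆ s, LinearIndepOn R id t ∧ x ∈ PointedCone.hull R t := by
  classical
  obtain ⟨T, hTs, hxT⟩ := Submodule.mem_span_finite_of_mem_span hx
  induction T using Finset.strongInduction with
  | H T ih =>
    by_cases hT : LinearIndepOn R id (T : Set M)
    · exact ⟨T, hTs, hT, hxT⟩
    · obtain ⟨v, hv, hxv⟩ := mem_hull_erase_of_not_linearIndepOn hT hxT
      exact ih _ (Finset.erase_ssubset hv)
        ((Finset.coe_subset.2 (Finset.erase_subset v T)).trans hTs) hxv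

theorem pos_of_mem_hull {s : Set M} {x : M} {f : M →ₗ[R] R} (hf : ∀ v ∈ s, 0 < f v)
    (hx : x ∈ PointedCone.hull R s) (hx0 : x ≠ 0) : 0 < f x := by
  have hnonneg : ∀ z ∈ PointedCone.hull R s, z = 0 ∨ 0 < f z := by
    intro z hz
    induction hz using Submodule.span_induction with
    | mem v hv => exact .inr (hf v hv)
    | zero => exact .inl rfl
    | add a b _ _ ha hb =>
      rcases ha with rfl | ha
      · simpa using hb
      · rcases hb with rfl | hb
        · simpa using Or.inr ha
        · exact .inr (by simpa using add_pos ha hb)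
    | smul r a _ ha =>
      rcases eq_or_ne r 0 with rfl | hr
      · simp
      · have hr0 : 0 < (r : R) := lt_of_le_of_ne r.2 (Subtype.coe_injective.ne hr.symm)
        exact ha.imp (by rintro rfl; simp) fun ha => (map_smul f (r : R) a).symm ▸ mul_pos hr0 ha
  exact (hnonneg x hx).resolve_left hx0

end ConicalHull

variable {V : Type*} [NormedAddCommGroup V] [InnerProductSpace ℝ V]

theorem exists_inner_eq_one_of_linearIndepOn [FiniteDimensional ℝ V] {t : Set V}
    (ht : LinearIndepOn ℝ id t) : ∃ u : V, ∀ v ∈ t, ⟪u, v⟫ = 1 := by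
  let b := Module.Basis.extend ht
  let f : V →ₗ[ℝ] ℝ := b.constr ℝ fun _ => (1 : ℝ)
  refine ⟨(InnerProductSpace.toDual ℝ V).symm f.toContinuousLinearMap, fun v hv => ?_⟩
  have hb : b ⟨v, ht.subset_extend _ hv⟩ = v := Module.Basis.extend_apply_self ht _
  rw [InnerProductSpace.toDual_symm_apply, LinearMap.coe_toContinuousLinearMap', ← hb,
    Module.Basis.constr_basis]

/-- The orthogonal projection of the sample `X` along every direction `u` has a point of halfspace
depth at least `k`, the depth counting sample points rather than their proportion. The projection
is encoded by keeping only the halfspaces whose normal `w` is orthogonal to `u`; the deep point is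
then any preimage `x`. -/
def HasDeepProjections {ι : Type*} (X : ι → V) (k : ℕ) : Prop :=
  ∀ u ≠ 0, ∃ x, ∀ w, ⟪w, u⟫ = 0 → k ≤ {i | ⟪w, X i⟫ ≤ ⟪w, x⟫}.ncard

section DeepPoints

variable {ι : Type*} {X : ι → V} {k : ℕ}

theorem HasDeepProjections.add_const (hX : HasDeepProjections X k) (a : V) :
    HasDeepProjections (fun i => X i + a) k := by
  intro u hu
  obtain ⟨x, hx⟩ := hX u hu
  exact ⟨x + a, by simpa [inner_add_right] using hx⟩

theorem exists_forall_inner_lt_of_notMem_convexHull_range [CompleteSpace V] [Finite ι]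
    {y : V} (hy : y ∉ convexHull ℝ (Set.range X)) : ∃ p : V, ∀ i, ⟪p, y⟫ < ⟪p, X i⟫ := by
  obtain ⟨f, s, hys, hs⟩ := geometric_hahn_banach_point_closed (convex_convexHull ℝ _)
    ((Set.finite_range X).isClosed_convexHull ℝ) hy
  refine ⟨(InnerProductSpace.toDual ℝ V).symm f, fun i => ?_⟩
  simp only [InnerProductSpace.toDual_symm_apply]
  exact hys.trans (hs _ (subset_convexHull ℝ _ ⟨i, rfl⟩))

theorem exists_inner_le_of_mem_convexHull {s : Set V} {x : V} (hx : x ∈ convexHull ℝ s) (v : V) :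
    ∃ y ∈ s, ⟪v, y⟫ ≤ ⟪v, x⟫ :=
  ((innerSL ℝ v).toLinearMap.concaveOn (convex_convexHull ℝ s)).exists_le_of_mem_convexHull
    (subset_convexHull ℝ s) hx

-- If `q` is a nonnegative combination of linearly independent bad directions `v`, choose `u` with
-- `⟪u, v⟫ = 1` for all of them and a point `x₀` that is deep in the projection along `u`. Then
-- `⟪u, q⟫⁻¹ • q - v` is orthogonal to `u`, so it puts some `X i` with `⟪v, X i⟫ < 0` below `x₀`.
-- Hence `⟪u, q⟫ * ⟪v, x₀⟫ < ⟪q, x₀⟫`, and weighting these inequalities by the coefficients of `q`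
-- gives `⟪u, q⟫ * ⟪q, x₀⟫ < ⟪u, q⟫ * ⟪q, x₀⟫`.
theorem HasDeepProjections.exists_inner_nonpos_of_mem_hull [FiniteDimensional ℝ V] [Finite ι]
    [Nonempty ι] (hX : HasDeepProjections X k) {q : V}
    (hq : q ∈ PointedCone.hull ℝ {v | {i | 0 ≤ ⟪v, X i⟫}.ncard < k}) : ∃ i, ⟪q, X i⟫ ≤ 0 := by
  by_contra! hpos
  have hq0 : q ≠ 0 := by
    rintro rfl
    simpa using hpos (Classical.arbitrary ι)
  obtain ⟨t, htB, htli, hqt⟩ := exists_linearIndepOn_subset_mem_hull hq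
  obtain ⟨u, hu⟩ := exists_inner_eq_one_of_linearIndepOn htli
  have huq : 0 < ⟪u, q⟫ :=
    pos_of_mem_hull (f := innerₛₗ ℝ u) (fun v hv => by simp [hu v hv]) hqt hq0
  have hu0 : u ≠ 0 := by
    rintro rfl
    simp at huq
  obtain ⟨x₀, hx₀⟩ := hX u hu0
  have hlt : ∀ v ∈ t, ⟪u, q⟫ * ⟪v, x₀⟫ < ⟪q, x₀⟫ := by
    intro v hv
    obtain ⟨i, hix₀, hiv⟩ : ∃ i, ⟪⟪u, q⟫⁻¹ • q - v, X i⟫ ≤ ⟪⟪u, q⟫⁻¹ • q - v, x₀⟫ ∧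
        ⟪v, X i⟫ < 0 := by
      have horth : ⟪⟪u, q⟫⁻¹ • q - v, u⟫ = 0 := by
        rw [inner_sub_left, real_inner_smul_left, real_inner_comm u q, real_inner_comm u v, hu v hv,
          inv_mul_cancel₀ huq.ne', sub_self]
      simpa using Set.exists_mem_notMem_of_ncard_lt_ncard ((htB hv).trans_le (hx₀ _ horth))
    simp only [inner_sub_left, real_inner_smul_left] at hix₀
    have hqi : 0 < ⟪u, q⟫⁻¹ * ⟪q, X i⟫ := mul_pos (inv_pos.2 huq) (hpos i)
    have hvx₀ : ⟪v, x₀⟫ < ⟪u, q⟫⁻¹ * ⟪q, x₀⟫ := by linarith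
    rwa [← div_eq_inv_mul, lt_div_iff₀' huq] at hvx₀
  have hℓ := pos_of_mem_hull (f := ⟪q, x₀⟫ • innerₛₗ ℝ u - ⟪u, q⟫ • innerₛₗ ℝ x₀)
    (fun v hv => by simpa [hu v hv, real_inner_comm] using hlt v hv) hqt hq0
  exact hℓ.ne' (by simp [real_inner_comm, mul_comm])

theorem isOpen_setOf_ncard_inner_nonneg_lt [Finite ι] (X : ι → V) (k : ℕ) :
    IsOpen {v | {i | 0 ≤ ⟪v, X i⟫}.ncard < k} := by
  refine isOpen_iff_mem_nhds.2 fun v₀ hv₀ => ?_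
  have hneg : ∀ᶠ v in nhds v₀, ∀ i, ⟪v₀, X i⟫ < 0 → ⟪v, X i⟫ < 0 :=
    Filter.eventually_all.2 fun i => Filter.eventually_imp_distrib_left.2 fun hi =>
      (continuous_id.inner continuous_const).continuousAt.eventually_lt_const hi
  filter_upwards [hneg] with v hv
  exact (Set.ncard_le_ncard fun i hi => not_lt.1 fun hi₀ => (hv i hi₀).not_ge hi).trans_lt hv₀

theorem HasDeepProjections.exists_forall_le_ncard_inner_nonneg [FiniteDimensional ℝ V] [Finite ι]
    [Nonempty ι] (hX : HasDeepProjections X k) (h0 : 0 ∉ convexHull ℝ (Set.range X)) :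
    ∃ u : V, ∀ v, 0 ≤ ⟪u, v⟫ → k ≤ {i | 0 ≤ ⟪v, X i⟫}.ncard := by
  let B : Set V := {v | {i | 0 ≤ ⟪v, X i⟫}.ncard < k}
  have hBopen : IsOpen (convexHull ℝ B) := (isOpen_setOf_ncard_inner_nonneg_lt X k).convexHull
  have hBhull : convexHull ℝ B ⊆ PointedCone.hull ℝ B :=
    convexHull_min PointedCone.subset_hull (PointedCone.convex _)
  have h0B : 0 ∉ convexHull ℝ B := by
    intro h0B
    obtain ⟨p, hp⟩ := exists_forall_inner_lt_of_notMem_convexHull_range h0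
    have hεp : ∀ᶠ ε in nhdsWithin (0 : ℝ) (Set.Ioi 0), ε • p ∈ convexHull ℝ B := by
      have hcont : Continuous fun ε : ℝ => ε • p := by fun_prop
      exact nhdsWithin_le_nhds
        (hcont.continuousAt.eventually_mem (hBopen.mem_nhds (by simpa using h0B)))
    obtain ⟨ε, hεB, hε⟩ := (hεp.and self_mem_nhdsWithin).exists
    obtain ⟨i, hi⟩ := hX.exists_inner_nonpos_of_mem_hull (hBhull hεB)
    rw [real_inner_smul_left] at hi
    exact hi.not_gt (mul_pos hε (by simpa using hp i))
  obtain ⟨f, hf⟩ := geometric_hahn_banach_point_open (convex_convexHull ℝ B) hBopen h0B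
  refine ⟨-(InnerProductSpace.toDual ℝ V).symm f, fun v hv => not_lt.1 fun hvB => ?_⟩
  have hfv := hf v (subset_convexHull ℝ B hvB)
  rw [inner_neg_left, InnerProductSpace.toDual_symm_apply] at hv
  rw [map_zero] at hfv
  linarith

theorem exists_smul_mem_convexHull_image [CompleteSpace V] [Finite ι] {u : V}
    (hu : ∀ v, 0 ≤ ⟪u, v⟫ → k ≤ {i | 0 ≤ ⟪v, X i⟫}.ncard) {J : Set ι} (hJ : Jᶜ.ncard < k) :
    ∃ s : ℝ, 0 ≤ s ∧ s • u ∈ convexHull ℝ (X '' J) := by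
  by_contra! hdisj
  let ray : Set V := (fun s : ℝ => s • u) '' Set.Ici 0
  have hray_convex : Convex ℝ ray := (convex_Ici 0).linear_image (LinearMap.toSpanSingleton ℝ V u)
  have hray_closed : IsClosed ray := isClosedMap_smul_left u _ isClosed_Ici
  obtain ⟨f, a, b, hfa, hab, hbf⟩ := geometric_hahn_banach_compact_closed
    (convex_convexHull ℝ (X '' J)) ((J.toFinite.image X).isCompact_convexHull ℝ) hray_convex
    hray_closed (Set.disjoint_right.2 (by rintro _ ⟨s, hs, rfl⟩; exact hdisj s hs))
  have hb0 : b < 0 := by simpa using hbf ((0 : ℝ) • u) ⟨0, Set.self_mem_Ici, rfl⟩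
  have hfu : 0 ≤ f u := by
    by_contra! hneg
    have := hbf ((b / f u) • u) ⟨b / f u, (div_pos_of_neg_of_neg hb0 hneg).le, rfl⟩
    simp [hneg.ne] at this
  have hk := hu ((InnerProductSpace.toDual ℝ V).symm f)
    (by rwa [real_inner_comm, InnerProductSpace.toDual_symm_apply])
  simp only [InnerProductSpace.toDual_symm_apply] at hk
  refine hJ.not_ge (hk.trans (Set.ncard_le_ncard (t := Jᶜ) fun i hi hiJ => ?_))
  have hfi := hfa (X i) (subset_convexHull ℝ _ ⟨i, hiJ, rfl⟩)
  have hi0 : 0 ≤ f (X i) := hi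
  linarith

theorem HasDeepProjections.exists_mem_convexHull_forall_inner_neg [FiniteDimensional ℝ V]
    [Finite ι] [Nonempty ι] (hX : HasDeepProjections X k) (hk : 0 < k) :
    ∃ x ∈ convexHull ℝ (Set.range X),
      ∀ v, ⟪v, x⟫ < 0 → k ≤ {i | ⟪v, X i⟫ ≤ ⟪v, x⟫}.ncard := by
  by_cases h0 : 0 ∈ convexHull ℝ (Set.range X)
  · exact ⟨0, h0, by simp⟩
  obtain ⟨u, hu⟩ := hX.exists_forall_le_ncard_inner_nonneg h0
  let T : Set ℝ := {s | 0 ≤ s ∧ s • u ∈ convexHull ℝ (Set.range X)}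
  have hTne : T.Nonempty := by
    obtain ⟨s, hs, hsu⟩ := exists_smul_mem_convexHull_image hu (J := Set.univ) (by simpa)
    exact ⟨s, hs, by rwa [Set.image_univ] at hsu⟩
  have hTclosed : IsClosed T := isClosed_Ici.inter <|
    ((Set.finite_range X).isClosed_convexHull ℝ).preimage (continuous_id.smul continuous_const)
  have hTbdd : BddBelow T := ⟨0, fun s hs => hs.1⟩
  obtain ⟨ht0, htu⟩ := hTclosed.csInf_mem hTne hTbdd
  refine ⟨sInf T • u, htu, fun v hv => not_lt.1 fun hcount => ?_⟩
  obtain ⟨s, hs0, hsu⟩ := exists_smul_mem_convexHull_image hu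
    (J := {i | ⟪v, sInf T • u⟫ < ⟪v, X i⟫}) (by simpa [Set.compl_ofPred] using hcount)
  have hts : sInf T ≤ s :=
    csInf_le hTbdd ⟨hs0, convexHull_mono (Set.image_subset_range _ _) hsu⟩
  obtain ⟨_, ⟨i, hi, rfl⟩, his⟩ := exists_inner_le_of_mem_convexHull hsu v
  have hlt : ⟪v, sInf T • u⟫ < ⟪v, s • u⟫ := lt_of_lt_of_le hi his
  simp only [real_inner_smul_right] at hv hlt
  have hvu : ⟪v, u⟫ < 0 := neg_of_mul_neg_right hv ht0
  exact hlt.not_ge (mul_le_mul_of_nonpos_right hts hvu.le)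

theorem HasDeepProjections.exists_mem_convexHull_forall_inner_lt [FiniteDimensional ℝ V]
    [Finite ι] [Nonempty ι] (hX : HasDeepProjections X k) (hk : 0 < k) (y : V) :
    ∃ x ∈ convexHull ℝ (Set.range X),
      ∀ v, ⟪v, x⟫ < ⟪v, y⟫ → k ≤ {i | ⟪v, X i⟫ ≤ ⟪v, x⟫}.ncard := by
  obtain ⟨x, hx, hdeep⟩ := (hX.add_const (-y)).exists_mem_convexHull_forall_inner_neg hk
  refine ⟨x + y, ?_, fun v hv => ?_⟩
  · refine convexHull_min ?_ ((convex_convexHull ℝ (Set.range X)).translate_preimage_left y) hx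
    rintro _ ⟨i, rfl⟩
    simpa using subset_convexHull ℝ _ (Set.mem_range_self i)
  · have := hdeep v (by rw [inner_add_right] at hv; linarith)
    simpa [inner_add_right] using this

end DeepPoints

section Depth

variable {d n : ℕ} {X : Fin n → E d} {x y u : E d} {c : ℝ}

theorem sideCount_mono (h : ⟪u, x⟫ ≤ ⟪u, y⟫) : sideCount X u x ≤ sideCount X u y :=
  Set.ncard_le_ncard fun _ hi => le_trans hi h

theorem sideCount_le_sideCount_zero (X : Fin n → E d) (u x : E d) :
    sideCount X u x ≤ sideCount X 0 x :=
  Set.ncard_le_ncard fun i _ => by simp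

theorem sideCount_le (X : Fin n → E d) (u x : E d) : sideCount X u x ≤ n :=
  (Set.ncard_le_card _).trans_eq (Nat.card_fin n)

theorem sideCount_smul {r : ℝ} (hr : 0 < r) (X : Fin n → E d) (u x : E d) :
    sideCount X (r • u) x = sideCount X u x := by
  simp only [sideCount, real_inner_smul_left, mul_le_mul_iff_right₀ hr]

theorem sideCount_append_const (X : Fin n → E d) (m : ℕ) (y u x : E d) :
    sideCount (Fin.append X fun _ : Fin m => y) u x =
      sideCount X u x + if ⟪u, y⟫ ≤ ⟪u, x⟫ then m else 0 := by
  classical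
  simp only [sideCount, Set.ncard_eq_toFinset_card', Set.toFinset_ofPred, Finset.card_filter,
    Fin.sum_univ_add, Fin.append_left, Fin.append_right]
  simp

theorem sideCount_pos_of_mem_convexHull (hx : x ∈ convexHull ℝ (Set.range X)) (u : E d) :
    0 < sideCount X u x := by
  obtain ⟨_, ⟨i, rfl⟩, hi⟩ := exists_inner_le_of_mem_convexHull hx u
  exact (Set.ncard_pos).2 ⟨i, hi⟩

theorem le_depth_iff (hd : 0 < d) :
    c ≤ depth X x ↔ ∀ u : E d, c ≤ (sideCount X u x : ℝ) / n := by
  have hbdd : BddBelow {r : ℝ | ∃ u : E d, ‖u‖ = 1 ∧ r = (sideCount X u x : ℝ) / n} :=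
    ⟨0, by rintro _ ⟨u, -, rfl⟩; positivity⟩
  have hunit : ‖EuclideanSpace.single (⟨0, hd⟩ : Fin d) (1 : ℝ)‖ = 1 := by simp
  rw [depth, le_csInf_iff hbdd ⟨_, _, hunit, rfl⟩]
  refine ⟨fun h u => ?_, by rintro h _ ⟨u, -, rfl⟩; exact h u⟩
  rcases eq_or_ne u 0 with rfl | hu
  · refine (h _ ⟨_, hunit, rfl⟩).trans ?_
    gcongr
    exact sideCount_le_sideCount_zero X _ x
  · rw [← sideCount_smul (inv_pos.2 (norm_pos_iff.2 hu))]
    exact h _ ⟨_, norm_smul_inv_norm hu, rfl⟩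

theorem depth_nonneg (X : Fin n → E d) (x : E d) : 0 ≤ depth X x :=
  Real.sInf_nonneg (by rintro _ ⟨u, -, rfl⟩; positivity)

theorem finite_range_depth (X : Fin n → E d) : (Set.range (depth X)).Finite := by
  have hvalues : ((fun k : ℕ => (k : ℝ) / n) '' Set.Iic n).Finite := (Set.finite_Iic n).image _
  refine (hvalues.finite_subsets.image sInf).subset ?_
  rintro _ ⟨x, rfl⟩
  refine ⟨_, ?_, rfl⟩
  rintro _ ⟨u, -, rfl⟩
  exact ⟨sideCount X u x, sideCount_le X u x, rfl⟩

theorem depth_le_maxDepth (X : Fin n → E d) (x : E d) : depth X x ≤ maxDepth X :=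
  le_csSup (finite_range_depth X).bddAbove ⟨x, rfl⟩

theorem exists_depth_eq_maxDepth (X : Fin n → E d) : ∃ x, depth X x = maxDepth X :=
  (Set.range_nonempty (depth X)).csSup_mem (finite_range_depth X)

theorem maxDepth_nonneg (X : Fin n → E d) : 0 ≤ maxDepth X :=
  (depth_nonneg X 0).trans (depth_le_maxDepth X 0)

theorem convex_MSet (hd : 0 < d) (X : Fin n → E d) : Convex ℝ (MSet X) := by
  refine convex_iff_segment_subset.2 fun a ha b hb z hz => ?_
  refine (depth_le_maxDepth X z).antisymm ((le_depth_iff hd).2 fun u => ?_)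
  rw [← convexHull_pair] at hz
  obtain ⟨c, hc, hcz⟩ := exists_inner_le_of_mem_convexHull hz u
  have hcM : depth X c = maxDepth X := Set.pair_subset ha hb hc
  refine ((le_depth_iff hd).1 hcM.ge u).trans ?_
  gcongr
  exact sideCount_mono hcz

end Depth

section Projection

variable {d n : ℕ} {u w : E d} {A : Fin (d - 1) → E d}

theorem finrank_orthogonal_span_singleton_eq_sub_one (hu : u ≠ 0) :
    Module.finrank ℝ (ℝ ∙ u)ᗮ = d - 1 := by
  have h := (ℝ ∙ u).finrank_add_finrank_orthogonal
  rw [finrank_span_singleton hu, finrank_euclideanSpace_fin] at h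
  omega

theorem exists_isAu (hu : ‖u‖ = 1) : ∃ A, IsAu u A := by
  have hu0 : u ≠ 0 := norm_ne_zero_iff.1 (hu.trans_ne one_ne_zero)
  let b := (stdOrthonormalBasis ℝ (ℝ ∙ u)ᗮ).reindex
    (finCongr (finrank_orthogonal_span_singleton_eq_sub_one hu0))
  exact ⟨fun j => b j, hu, b.orthonormal.comp_linearIsometry (Submodule.subtypeₗᵢ _),
    fun j => Submodule.mem_orthogonal_singleton_iff_inner_left.1 (b j).2⟩

theorem inner_proj_left (A : Fin (d - 1) → E d) (w : E d) (z : E (d - 1)) :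
    ⟪proj A w, z⟫ = ⟪w, embed A z⟫ := by
  rw [embed, inner_sum, PiLp.inner_apply]
  simp [proj, real_inner_smul_right, real_inner_comm w]

theorem IsAu.embed_proj (hA : IsAu u A) (hw : ⟪w, u⟫ = 0) : embed A (proj A w) = w := by
  obtain ⟨hu, hon, horth⟩ := hA
  have hu0 : u ≠ 0 := norm_ne_zero_iff.1 (hu.trans_ne one_ne_zero)
  have hmem {x : E d} : x ∈ (ℝ ∙ u)ᗮ ↔ ⟪x, u⟫ = 0 :=
    Submodule.mem_orthogonal_singleton_iff_inner_left
  have hon' := hon.codRestrict (ℝ ∙ u)ᗮ fun j => hmem.2 (horth j)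
  have hspan := hon'.linearIndependent.span_eq_top_of_card_eq_finrank'
    (by rw [Fintype.card_fin, finrank_orthogonal_span_singleton_eq_sub_one hu0])
  have hsum := (OrthonormalBasis.mk hon' hspan.ge).sum_repr' ⟨w, hmem.2 hw⟩
  simpa [embed, proj] using congrArg Subtype.val hsum

theorem IsAu.sideCount_proj (hA : IsAu u A) (hw : ⟪w, u⟫ = 0) (X : Fin n → E d) (z : E (d - 1)) :
    sideCount (fun i => proj A (X i)) (proj A w) z = sideCount X w (embed A z) := by
  have hproj (x : E d) : ⟪proj A w, proj A x⟫ = ⟪w, x⟫ := by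
    rw [real_inner_comm, inner_proj_left, hA.embed_proj hw, real_inner_comm]
  simp only [sideCount, hproj, inner_proj_left]

theorem IsAu.lambda0_le_maxDepth_proj (hA : IsAu u A) (X : Fin n → E d) :
    lambda0 X ≤ maxDepth fun i => proj A (X i) :=
  csInf_le ⟨0, by rintro _ ⟨u, A, -, rfl⟩; exact maxDepth_nonneg _⟩ ⟨u, A, hA, rfl⟩

theorem hasDeepProjections_of_le_mul_lambda0 (hd : 2 ≤ d) {X : Fin n → E d} {k : ℕ}
    (hk : (k : ℝ) ≤ n * lambda0 X) : HasDeepProjections X k := by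
  intro u hu
  obtain ⟨A, hA⟩ := exists_isAu (norm_smul_inv_norm (𝕜 := ℝ) hu)
  obtain ⟨z, hz⟩ := exists_depth_eq_maxDepth fun i => proj A (X i)
  refine ⟨embed A z, fun w hw => ?_⟩
  have hwu : ⟪w, (‖u‖⁻¹ : ℝ) • u⟫ = 0 := by rw [real_inner_smul_right, hw, mul_zero]
  have hle : lambda0 X ≤ (sideCount X w (embed A z) : ℝ) / n := by
    rw [← hA.sideCount_proj hwu]
    exact (le_depth_iff (by omega)).1 ((hA.lambda0_le_maxDepth_proj X).trans hz.ge) _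
  have hcast : (k : ℝ) ≤ sideCount X w (embed A z) :=
    calc (k : ℝ) ≤ n * lambda0 X := hk
      _ ≤ n * ((sideCount X w (embed A z) : ℝ) / n) := by gcongr
      _ = sideCount X w (embed A z) * ((n : ℝ) / n) := mul_div_left_comm _ _ _
      _ ≤ sideCount X w (embed A z) :=
        mul_le_of_le_one_right (Nat.cast_nonneg _) (div_self_le_one _)
  exact_mod_cast hcast

end Projection

section Average

theorem exists_isometry_interior_preimage_nonempty [FiniteDimensional ℝ V] {s : Set V}
    (hs : Convex ℝ s) (hne : s.Nonempty) : ∃ g : (affineSpan ℝ s).direction → V,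
      Isometry g ∧ s ⊆ Set.range g ∧ (interior (g ⁻¹' s)).Nonempty := by
  obtain ⟨_, q, hq, rfl⟩ := hne.intrinsicInterior hs
  have : Nonempty (affineSpan ℝ s) := ⟨q⟩
  let e : (affineSpan ℝ s).direction ≃ᵢ affineSpan ℝ s := IsometryEquiv.vaddConst q
  refine ⟨fun w => e w, isometry_subtype_coe.comp e.isometry, fun z hz => ?_, e.symm q, ?_⟩
  · exact ⟨e.symm ⟨z, subset_affineSpan ℝ s hz⟩, by simp⟩
  · refine mem_interior_iff_mem_nhds.2 (e.continuous.continuousAt.preimage_mem_nhds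
      (t := (↑) ⁻¹' s) ?_)
    rw [e.apply_symm_apply]
    exact mem_interior_iff_mem_nhds.1 hq

theorem hausdorffMeasure_ne_zero_and_ne_top [FiniteDimensional ℝ V] [MeasurableSpace V]
    [BorelSpace V] {s : Set V} (hs : Convex ℝ s) (hne : s.Nonempty) (hb : Bornology.IsBounded s) :
    μH[(Module.finrank ℝ (affineSpan ℝ s).direction : ℝ)] s ≠ 0 ∧
      μH[(Module.finrank ℝ (affineSpan ℝ s).direction : ℝ)] s ≠ ⊤ := by
  obtain ⟨g, hg, hrange, hint⟩ := exists_isometry_interior_preimage_nonempty hs hne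
  have := isAddHaarMeasure_hausdorffMeasure (E := (affineSpan ℝ s).direction)
  have hpre := hg.hausdorffMeasure_preimage
    (d := (Module.finrank ℝ (affineSpan ℝ s).direction : ℝ)) (.inl (Nat.cast_nonneg _)) s
  rw [Set.inter_eq_left.2 hrange] at hpre
  rw [← hpre]
  exact ⟨(Measure.measure_pos_of_nonempty_interior _ hint).ne',
    (hg.antilipschitz.isBounded_preimage hb).measure_lt_top.ne⟩

theorem setAverage_mem {d : ℕ} {M K : Set (E d)} (hM : Convex ℝ M) (hne : M.Nonempty)
    (hK : IsCompact K) (hKconv : Convex ℝ K) (hMK : M ⊆ K) : setAverage M ∈ K := by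
  obtain ⟨hzero, htop⟩ := hausdorffMeasure_ne_zero_and_ne_top hM hne (hK.isBounded.subset hMK)
  let μ : Measure (E d) := μH[(Module.finrank ℝ (affineSpan ℝ M).direction : ℝ)]
  have hae : ∀ᵐ x ∂μ.restrict M, x ∈ K :=
    ae_mono (Measure.restrict_mono hMK le_rfl) (ae_restrict_mem hK.measurableSet)
  obtain ⟨C, hC⟩ := hK.isBounded.exists_norm_le
  have hint : IntegrableOn (fun x : E d => x) M μ :=
    .of_bound htop.lt_top aestronglyMeasurable_id C (hae.mono hC)
  have hmem := hKconv.set_average_mem hK.isClosed hzero htop hae hint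
  rwa [setAverage_eq] at hmem

end Average

section Contamination

variable {d n m : ℕ} {X : Fin n → E d}

theorem le_maxDepth_append_const (hd : 0 < d) (hX : HasDeepProjections X (m + 1)) (hn : 0 < n)
    (y : E d) :
    ((m + 1 : ℕ) : ℝ) / (n + m : ℕ) ≤ maxDepth (Fin.append X fun _ : Fin m => y) := by
  have : Nonempty (Fin n) := ⟨⟨0, hn⟩⟩
  obtain ⟨x, hx, hdeep⟩ := hX.exists_mem_convexHull_forall_inner_lt m.succ_pos y
  refine le_trans ((le_depth_iff hd).2 fun v => ?_) (depth_le_maxDepth _ x)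
  gcongr
  rw [sideCount_append_const]
  split_ifs with hv
  · have := sideCount_pos_of_mem_convexHull hx v
    omega
  · exact hdeep v (not_le.1 hv)

theorem MSet_append_const_subset_convexHull (hd : 0 < d) (hX : HasDeepProjections X (m + 1))
    (hn : 0 < n) (y : E d) :
    MSet (Fin.append X fun _ : Fin m => y) ⊆ convexHull ℝ (Set.range X) := by
  intro z hz
  by_contra hzX
  obtain ⟨p, hp⟩ := exists_forall_inner_lt_of_notMem_convexHull_range hzX
  have hX0 : sideCount X p z = 0 :=
    (Set.ncard_eq_zero).2 (Set.eq_empty_of_forall_notMem fun i => not_le.2 (hp i))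
  have hle : sideCount (Fin.append X fun _ : Fin m => y) p z ≤ m := by
    rw [sideCount_append_const, hX0]
    split_ifs <;> omega
  have hge := (le_depth_iff hd).1 ((le_maxDepth_append_const hd hX hn y).trans hz.ge) p
  rw [div_le_div_iff_of_pos_right (by positivity), Nat.cast_le] at hge
  omega

theorem median_stays_in_hull_general (hd : 2 ≤ d) (X : Fin n → E d) (m : ℕ)
    (hm : (m : ℝ) ≤ (n : ℝ) * lambda0 X - 1) (y : E d) :
    TukeyMedian (Fin.append X fun _ : Fin m => y) ∈ convexHull ℝ (Set.range X) := by
  have hn : 0 < n := by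
    rw [Nat.pos_iff_ne_zero]
    rintro rfl
    rw [Nat.cast_zero, zero_mul, zero_sub] at hm
    linarith [m.cast_nonneg (α := ℝ)]
  have hX : HasDeepProjections X (m + 1) :=
    hasDeepProjections_of_le_mul_lambda0 hd (by push_cast; linarith)
  exact setAverage_mem (convex_MSet (by omega) _) (exists_depth_eq_maxDepth _)
    ((Set.finite_range X).isCompact_convexHull ℝ) (convex_convexHull ℝ _)
    (MSet_append_const_subset_convexHull (by omega) hX hn y)

end Contamination

/-- If `X` is in general position and `1 ≤ m ≤ n·λ₀ − 1`, then for every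
point `y`, contaminating `X` with `m` repetitions of `y` leaves the Tukey halfspace median
inside the convex hull of the original sample. -/
theorem median_stays_in_hull {d n : ℕ} (hd : 2 ≤ d) (X : Fin n → E d)
    (hX : inGeneralPosition X) (m : ℕ) (hm : 1 ≤ m)
    (hm' : (m : ℝ) ≤ (n : ℝ) * lambda0 X - 1) :
    ∀ y : E d, TukeyMedian (Fin.append X (fun _ : Fin m => y)) ∈
      convexHull ℝ (Set.range X) :=
  median_stays_in_hull_general hd X m hm'
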